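/- arXiv:1512.08227 — 5 statements merged into one kernel-verified Lean document; each statement's English description precedes it below -/
import Mathlib

section
/- Fix an integer k ≥ 1. List the Laplace eigenfunctions on the circle (with multiplicity) as e₀ = 1, e₁(θ) = cos θ, e₂(θ) = sin θ, e₃(θ) = cos 2θ, e₄(θ) = sin 2θ, …, so that the k-th eigenvalue (with multiplicity) is λ_k = ⌈k/2⌉². Let f : ℝ → ℝ be a positive continuous 2π-periodic function and let ψ₁, …, ψ_{k−1} : ℝ → ℝ be any continuous 2π-periodic functions. Then there exists a function u in the linear span of {e₀, e₁, …, e_k}, not identically zero, with ∫₀^{2π} f u dθ = 0, ∫₀^{2π} ψᵢ u dθ = 0 for all 1 ≤ i ≤ k−1, and ∫₀^{2π} (u')² dθ ≤ ⌈k/2⌉² · ∫₀^{2π} u² dθ. -/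
open Real

/-!
On the circle, integrating by parts against an eigenfunction `v` of `-d²/dθ²` with eigenvalue `μ`
gives `∫ u' v' = μ ∫ u v`. By symmetry in `u` and `v`, eigenfunctions with different eigenvalues are
orthogonal; moreover an orthogonal family of eigenfunctions `gᵢ` has orthogonal derivatives with
`∫ gᵢ'² = μᵢ ∫ gᵢ²`. Pythagoras applied to `u = ∑ cᵢ gᵢ` and to `u' = ∑ cᵢ gᵢ'` therefore yields
`∫ u'² ≤ (max μᵢ) ∫ u²` for all `c`. Fewer orthogonality constraints than there are functions `gᵢ`
always leave some `c ≠ 0`, and `u ≠ 0` by Pythagoras again.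
-/

open Function MeasureTheory

theorem exists_ne_zero_mulVec_eq_zero {K κ ι : Type*} [Field K] [Fintype κ] [Fintype ι]
    (hcard : Fintype.card κ < Fintype.card ι) (A : Matrix κ ι K) :
    ∃ c : ι → K, c ≠ 0 ∧ A.mulVec c = 0 := by
  have hker : A.mulVecLin.ker ≠ ⊥ := LinearMap.ker_ne_bot_of_finrank_lt (by simpa using hcard)
  obtain ⟨c, hc, hc0⟩ := Submodule.exists_mem_ne_zero_of_ne_bot hker
  exact ⟨c, hc0, hc⟩

section LinearCombination

variable {ι : Type*} [Fintype ι] {g : ι → ℝ → ℝ} {a b : ℝ}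

theorem integral_mul_linearCombination {f : ℝ → ℝ} (hf : IntervalIntegrable f volume a b)
    (hg : ∀ i, Continuous (g i)) (c : ι → ℝ) :
    ∫ θ in a..b, f θ * ∑ i, c i * g i θ = ∑ i, c i * ∫ θ in a..b, f θ * g i θ := by
  simp only [Finset.mul_sum, mul_left_comm (f _)]
  rw [intervalIntegral.integral_finsetSum fun i _ =>
    (hf.mul_continuousOn (hg i).continuousOn).const_mul (c i)]
  simp only [intervalIntegral.integral_const_mul]

theorem integral_sq_linearCombination_of_orthogonal (hg : ∀ i, Continuous (g i))
    (hortho : Pairwise fun i j => ∫ θ in a..b, g i θ * g j θ = 0) (c : ι → ℝ) :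
    ∫ θ in a..b, (∑ i, c i * g i θ) ^ 2 = ∑ i, c i ^ 2 * ∫ θ in a..b, g i θ ^ 2 := by
  have hu : Continuous fun θ => ∑ i, c i * g i θ := by fun_prop
  have hproj (i : ι) :
      ∫ θ in a..b, (∑ j, c j * g j θ) * g i θ = c i * ∫ θ in a..b, g i θ ^ 2 := by
    simp only [mul_comm _ (g i _), sq]
    rw [integral_mul_linearCombination ((hg i).intervalIntegrable a b) hg]
    exact Fintype.sum_eq_single i fun j hj => by rw [hortho hj.symm, mul_zero]
  simp only [sq (∑ i, c i * g i _)]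
  rw [integral_mul_linearCombination (hu.intervalIntegrable a b) hg]
  simp only [hproj, sq (c _), mul_assoc]

theorem eq_zero_of_linearCombination_eq_zero_of_orthogonal (hg : ∀ i, Continuous (g i))
    (hortho : Pairwise fun i j => ∫ θ in a..b, g i θ * g j θ = 0)
    (hpos : ∀ i, 0 < ∫ θ in a..b, g i θ ^ 2) {c : ι → ℝ} (hc : ∀ θ, ∑ i, c i * g i θ = 0) :
    c = 0 := by
  have hsum : ∑ i, c i ^ 2 * ∫ θ in a..b, g i θ ^ 2 = 0 := by
    simp [← integral_sq_linearCombination_of_orthogonal hg hortho, hc]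
  rw [Fintype.sum_eq_zero_iff_of_nonneg fun i => mul_nonneg (sq_nonneg _) (hpos i).le] at hsum
  funext i
  simpa [(hpos i).ne'] using congrFun hsum i

end LinearCombination

theorem periodic_deriv {𝕜 F : Type*} [NontriviallyNormedField 𝕜] [NormedAddCommGroup F]
    [NormedSpace 𝕜 F] {u : 𝕜 → F} {T : 𝕜} (hu : u.Periodic T) : (deriv u).Periodic T := fun θ => by
  rw [← deriv_comp_add_const, hu.funext]

section Periodic

variable {T : ℝ} {u v : ℝ → ℝ}

theorem integral_deriv_mul_deriv_of_periodic (hu : ContDiff ℝ 1 u) (hv : ContDiff ℝ 2 v)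
    (hu_per : u.Periodic T) (hv_per : v.Periodic T) :
    ∫ θ in 0..T, deriv u θ * deriv v θ = -∫ θ in 0..T, u θ * deriv (deriv v) θ := by
  have hv' : ContDiff ℝ 1 (deriv v) := hv.deriv'
  rw [intervalIntegral.integral_mul_deriv_eq_deriv_mul
    (fun θ _ => (hu.differentiable one_ne_zero θ).hasDerivAt)
    (fun θ _ => (hv'.differentiable one_ne_zero θ).hasDerivAt)
    (hu.continuous_deriv_one.intervalIntegrable 0 T)
    (hv'.continuous_deriv_one.intervalIntegrable 0 T),
    hu_per.eq, (periodic_deriv hv_per).eq, sub_self, zero_sub, neg_neg]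

theorem integral_sq_pos_of_periodic (hT : 0 < T) (hu : Continuous u) (hu_per : u.Periodic T)
    (hu_ne : u ≠ 0) : 0 < ∫ θ in 0..T, u θ ^ 2 := by
  obtain ⟨θ, hθ⟩ := ne_iff.1 hu_ne
  obtain ⟨θ₀, hθ₀, heq⟩ := hu_per.exists_mem_Ico₀ hT θ
  refine intervalIntegral.integral_pos hT (hu.pow 2).continuousOn (fun _ _ => sq_nonneg _)
    ⟨θ₀, Set.Ico_subset_Icc_self hθ₀, ?_⟩
  rw [← heq]
  exact sq_pos_of_ne_zero hθ

end Periodic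

/-- `u` solves `-u'' = μ u` on the circle `ℝ / Tℤ`. Functions on the circle are encoded as
`T`-periodic functions on `ℝ`, and `u = 0` is allowed, so this says that `u` belongs to the
eigenspace of `μ`. -/
structure IsCircleEigenfunction (T μ : ℝ) (u : ℝ → ℝ) : Prop where
  contDiff : ContDiff ℝ 2 u
  periodic : u.Periodic T
  deriv_deriv : ∀ θ, deriv (deriv u) θ = -(μ * u θ)

namespace IsCircleEigenfunction

section Pair

variable {T μ ν : ℝ} {u v : ℝ → ℝ}

theorem contDiff_one (hu : IsCircleEigenfunction T μ u) : ContDiff ℝ 1 u :=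
  hu.contDiff.of_le one_le_two

theorem integral_deriv_mul_deriv (hv : IsCircleEigenfunction T μ v) (hu : ContDiff ℝ 1 u)
    (hu_per : u.Periodic T) :
    ∫ θ in 0..T, deriv u θ * deriv v θ = μ * ∫ θ in 0..T, u θ * v θ := by
  simp only [integral_deriv_mul_deriv_of_periodic hu hv.contDiff hu_per hv.periodic,
    hv.deriv_deriv, mul_neg, intervalIntegral.integral_neg, neg_neg, mul_left_comm _ μ,
    intervalIntegral.integral_const_mul]

theorem integral_mul_eq_zero (hu : IsCircleEigenfunction T μ u)
    (hv : IsCircleEigenfunction T ν v) (hμν : μ ≠ ν) : ∫ θ in 0..T, u θ * v θ = 0 := by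
  have hsymm : μ * ∫ θ in 0..T, u θ * v θ = ν * ∫ θ in 0..T, u θ * v θ := by
    rw [← hv.integral_deriv_mul_deriv hu.contDiff_one hu.periodic]
    simp only [mul_comm (u _), mul_comm (deriv u _)]
    rw [hu.integral_deriv_mul_deriv hv.contDiff_one hv.periodic]
  exact (mul_eq_mul_right_iff.1 hsymm).resolve_left hμν

end Pair

section Family

variable {T : ℝ} {ι : Type*} [Fintype ι] {μ : ι → ℝ} {g : ι → ℝ → ℝ}

theorem integral_sq_deriv_linearCombination (hg : ∀ i, IsCircleEigenfunction T (μ i) (g i))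
    (hortho : Pairwise fun i j => ∫ θ in 0..T, g i θ * g j θ = 0) (c : ι → ℝ) :
    ∫ θ in 0..T, deriv (fun θ => ∑ i, c i * g i θ) θ ^ 2 =
      ∑ i, c i ^ 2 * (μ i * ∫ θ in 0..T, g i θ ^ 2) := by
  have hderiv (θ : ℝ) : deriv (fun θ => ∑ i, c i * g i θ) θ = ∑ i, c i * deriv (g i) θ :=
    (HasDerivAt.fun_sum fun i _ =>
      ((hg i).contDiff_one.differentiable one_ne_zero θ).hasDerivAt.const_mul (c i)).deriv
  have hgreen (i j : ι) :
      ∫ θ in 0..T, deriv (g i) θ * deriv (g j) θ = μ j * ∫ θ in 0..T, g i θ * g j θ :=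
    (hg j).integral_deriv_mul_deriv (hg i).contDiff_one (hg i).periodic
  have hderiv_ortho : Pairwise fun i j => ∫ θ in 0..T, deriv (g i) θ * deriv (g j) θ = 0 :=
    fun i j hij => (hgreen i j).trans (by rw [hortho hij, mul_zero])
  simp only [hderiv]
  rw [integral_sq_linearCombination_of_orthogonal
    (fun i => (hg i).contDiff_one.continuous_deriv_one) hderiv_ortho]
  simp only [sq (deriv _ _), hgreen, sq (g _ _)]

theorem integral_sq_deriv_linearCombination_le (hT : 0 ≤ T)
    (hg : ∀ i, IsCircleEigenfunction T (μ i) (g i))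
    (hortho : Pairwise fun i j => ∫ θ in 0..T, g i θ * g j θ = 0) {Λ : ℝ} (hμ : ∀ i, μ i ≤ Λ)
    (c : ι → ℝ) :
    ∫ θ in 0..T, deriv (fun θ => ∑ i, c i * g i θ) θ ^ 2 ≤
      Λ * ∫ θ in 0..T, (∑ i, c i * g i θ) ^ 2 := by
  have hnonneg (i : ι) : 0 ≤ ∫ θ in 0..T, g i θ ^ 2 :=
    intervalIntegral.integral_nonneg hT fun _ _ => sq_nonneg _
  rw [integral_sq_deriv_linearCombination hg hortho,
    integral_sq_linearCombination_of_orthogonal (fun i => (hg i).contDiff.continuous) hortho,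
    Finset.mul_sum]
  refine Finset.sum_le_sum fun i _ => ?_
  rw [mul_left_comm Λ]
  gcongr
  exacts [hnonneg i, hμ i]

theorem exists_linearCombination_orthogonal_rayleigh_le (hT : 0 < T)
    (hg : ∀ i, IsCircleEigenfunction T (μ i) (g i)) (hg_ne : ∀ i, g i ≠ 0)
    (hortho : Pairwise fun i j => ∫ θ in 0..T, g i θ * g j θ = 0) {Λ : ℝ} (hμ : ∀ i, μ i ≤ Λ)
    {κ : Type*} [Fintype κ] (hcard : Fintype.card κ < Fintype.card ι) {φ : κ → ℝ → ℝ}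
    (hφ : ∀ k, IntervalIntegrable (φ k) volume 0 T) :
    ∃ (u : ℝ → ℝ) (c : ι → ℝ), (∀ θ, u θ = ∑ i, c i * g i θ) ∧ (¬ ∀ θ, u θ = 0) ∧
      (∀ k, ∫ θ in 0..T, φ k θ * u θ = 0) ∧
      ∫ θ in 0..T, deriv u θ ^ 2 ≤ Λ * ∫ θ in 0..T, u θ ^ 2 := by
  have hcont (i : ι) : Continuous (g i) := (hg i).contDiff.continuous
  have hpos (i : ι) : 0 < ∫ θ in 0..T, g i θ ^ 2 :=
    integral_sq_pos_of_periodic hT (hcont i) (hg i).periodic (hg_ne i)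
  obtain ⟨c, hc_ne, hc⟩ :=
    exists_ne_zero_mulVec_eq_zero hcard (.of fun k i => ∫ θ in 0..T, φ k θ * g i θ)
  refine ⟨fun θ => ∑ i, c i * g i θ, c, fun _ => rfl,
    mt (eq_zero_of_linearCombination_eq_zero_of_orthogonal hcont hortho hpos) hc_ne, fun k => ?_,
    integral_sq_deriv_linearCombination_le hT.le hg hortho hμ c⟩
  rw [integral_mul_linearCombination (hφ k) hcont]
  simpa [Matrix.mulVec, dotProduct, mul_comm] using congrFun hc k

end Family

end IsCircleEigenfunction

theorem deriv_cos_const_mul (a : ℝ) :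
    deriv (fun θ => cos (a * θ)) = fun θ => -(a * sin (a * θ)) := by
  funext θ
  simp [deriv_comp_mul_left a cos θ]

theorem deriv_sin_const_mul (a : ℝ) :
    deriv (fun θ => sin (a * θ)) = fun θ => a * cos (a * θ) := by
  funext θ
  simp [deriv_comp_mul_left a sin θ]

theorem isCircleEigenfunction_cos (m : ℕ) :
    IsCircleEigenfunction (2 * π) (m ^ 2) fun θ => cos (m * θ) where
  contDiff := by fun_prop
  periodic θ := by simp only [mul_add, cos_add_nat_mul_two_pi]
  deriv_deriv θ := by
    rw [deriv_cos_const_mul, deriv.fun_neg, deriv_const_mul_field, deriv_sin_const_mul]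
    ring

theorem isCircleEigenfunction_sin (m : ℕ) :
    IsCircleEigenfunction (2 * π) (m ^ 2) fun θ => sin (m * θ) where
  contDiff := by fun_prop
  periodic θ := by simp only [mul_add, sin_add_nat_mul_two_pi]
  deriv_deriv θ := by
    rw [deriv_sin_const_mul, deriv_const_mul_field, deriv_cos_const_mul]
    ring

theorem integral_sin_mul_cos_nat_mul (m : ℕ) :
    ∫ θ in 0..2 * π, sin (m * θ) * cos (m * θ) = 0 := by
  rcases eq_or_ne m 0 with rfl | hm
  · simp
  · rw [intervalIntegral.integral_comp_mul_left (fun x => sin x * cos x) (Nat.cast_ne_zero.2 hm),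
      integral_sin_mul_cos₁, mul_zero, sin_periodic.nat_mul_eq, sub_self, zero_div, smul_zero]

/-- The real trigonometric system `1, cos θ, sin θ, cos 2θ, sin 2θ, …`: its `i`-th member has
frequency `⌈i / 2⌉`, which natural-number division expresses as `(i + 1) / 2`. The index `0` goes
with the cosines because `1 = cos (0 * θ)`. -/
noncomputable def trigSystem (i : ℕ) (θ : ℝ) : ℝ :=
  if i = 0 ∨ Odd i then cos (((i + 1) / 2 : ℕ) * θ) else sin (((i + 1) / 2 : ℕ) * θ)

namespace trigSystem

theorem eq_cos {i : ℕ} (hi : i = 0 ∨ Odd i) :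
    trigSystem i = fun θ => cos (((i + 1) / 2 : ℕ) * θ) :=
  funext fun _ => if_pos hi

theorem eq_sin {i : ℕ} (hi : ¬ (i = 0 ∨ Odd i)) :
    trigSystem i = fun θ => sin (((i + 1) / 2 : ℕ) * θ) :=
  funext fun _ => if_neg hi

theorem isCircleEigenfunction (i : ℕ) :
    IsCircleEigenfunction (2 * π) (((i + 1) / 2 : ℕ) ^ 2) (trigSystem i) := by
  by_cases hi : i = 0 ∨ Odd i
  · exact eq_cos hi ▸ isCircleEigenfunction_cos _
  · exact eq_sin hi ▸ isCircleEigenfunction_sin _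

theorem ne_zero (i : ℕ) : trigSystem i ≠ 0 := by
  by_cases hi : i = 0 ∨ Odd i
  · exact ne_iff.2 ⟨0, by simp [eq_cos hi]⟩
  · have hm : (((i + 1) / 2 : ℕ) : ℝ) ≠ 0 := by
      rw [Nat.cast_ne_zero]
      omega
    exact ne_iff.2 ⟨π / 2 / ((i + 1) / 2 : ℕ), by simp [eq_sin hi, mul_div_cancel₀ _ hm]⟩

theorem integral_mul_eq_zero {i j : ℕ} (hij : i ≠ j) :
    ∫ θ in 0..2 * π, trigSystem i θ * trigSystem j θ = 0 := by
  by_cases hfreq : (i + 1) / 2 = (j + 1) / 2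
  · by_cases hi : i = 0 ∨ Odd i
    · have hj : ¬ (j = 0 ∨ Odd j) := by grind
      simp only [eq_cos hi, eq_sin hj, hfreq, mul_comm (cos _), integral_sin_mul_cos_nat_mul]
    · have hj : j = 0 ∨ Odd j := by grind
      simp only [eq_sin hi, eq_cos hj, hfreq, integral_sin_mul_cos_nat_mul]
  · refine (isCircleEigenfunction i).integral_mul_eq_zero (isCircleEigenfunction j) ?_
    simpa [sq_eq_sq₀] using hfreq

theorem eq_of_eq_one_cos_sin {e : ℕ → ℝ → ℝ} (he0 : ∀ θ, e 0 θ = 1)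
    (he_cos : ∀ m : ℕ, 1 ≤ m → ∀ θ, e (2 * m - 1) θ = cos (m * θ))
    (he_sin : ∀ m : ℕ, 1 ≤ m → ∀ θ, e (2 * m) θ = sin (m * θ)) : e = trigSystem := by
  funext i θ
  obtain ⟨m, rfl | rfl⟩ := Nat.even_or_odd' i
  · rcases Nat.eq_zero_or_pos m with rfl | hm
    · simp [he0, trigSystem]
    · have hfreq : (2 * m + 1) / 2 = m := by omega
      rw [he_sin m hm, eq_sin (by grind), hfreq]
  · have hfreq : (2 * m + 1 + 1) / 2 = m + 1 := by omega
    rw [eq_cos (by grind), hfreq]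
    exact he_cos (m + 1) (by omega) θ

end trigSystem

theorem kth_f_eigenvalue_le_kth_eigenvalue_circle_general
    (k : ℕ)
    (e : ℕ → ℝ → ℝ)
    (he0 : ∀ θ, e 0 θ = 1)
    (he_cos : ∀ m : ℕ, 1 ≤ m → ∀ θ, e (2 * m - 1) θ = cos (m * θ))
    (he_sin : ∀ m : ℕ, 1 ≤ m → ∀ θ, e (2 * m) θ = sin (m * θ))
    {κ : Type*} [Fintype κ] (hκ : Fintype.card κ ≤ k) (φ : κ → ℝ → ℝ)
    (hφ : ∀ i, IntervalIntegrable (φ i) volume 0 (2 * π)) :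
    ∃ u : ℝ → ℝ,
      (∃ c : Fin (k + 1) → ℝ, ∀ θ, u θ = ∑ i : Fin (k + 1), c i * e i θ) ∧
      (¬ ∀ θ, u θ = 0) ∧
      (∀ i, (∫ θ in (0:ℝ)..(2 * π), φ i θ * u θ) = 0) ∧
      (∫ θ in (0:ℝ)..(2 * π), (deriv u θ) ^ 2) ≤
        (((k + 1) / 2 : ℕ) : ℝ) ^ 2 * ∫ θ in (0:ℝ)..(2 * π), (u θ) ^ 2 := by
  obtain rfl := trigSystem.eq_of_eq_one_cos_sin he0 he_cos he_sin
  have hortho : Pairwise fun i j : Fin (k + 1) =>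
      ∫ θ in 0..2 * π, trigSystem i θ * trigSystem j θ = 0 :=
    fun i j hij => trigSystem.integral_mul_eq_zero (Fin.val_ne_of_ne hij)
  have hfreq (i : Fin (k + 1)) :
      (((i + 1) / 2 : ℕ) : ℝ) ^ 2 ≤ (((k + 1) / 2 : ℕ) : ℝ) ^ 2 := by
    gcongr
    exact i.is_le
  obtain ⟨u, c, hu, hu_ne, hu_ortho, hle⟩ :=
    IsCircleEigenfunction.exists_linearCombination_orthogonal_rayleigh_le two_pi_pos
      (fun i : Fin (k + 1) => trigSystem.isCircleEigenfunction i)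
      (fun i => trigSystem.ne_zero i) hortho hfreq (by simpa [Nat.lt_succ_iff] using hκ) hφ
  exact ⟨u, ⟨c, hu⟩, hu_ne, hu_ortho, hle⟩

theorem kth_f_eigenvalue_le_kth_eigenvalue_circle
    (k : ℕ) (hk : 1 ≤ k)
    (e : ℕ → ℝ → ℝ)
    (he0 : ∀ θ, e 0 θ = 1)
    (he_cos : ∀ m : ℕ, 1 ≤ m → ∀ θ, e (2 * m - 1) θ = Real.cos (m * θ))
    (he_sin : ∀ m : ℕ, 1 ≤ m → ∀ θ, e (2 * m) θ = Real.sin (m * θ))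
    (f : ℝ → ℝ)
    (hf_pos : ∀ θ, 0 < f θ)
    (hf_cont : Continuous f)
    (hf_per : ∀ θ, f (θ + 2 * π) = f θ)
    (ψ : Fin (k - 1) → ℝ → ℝ)
    (hψ_cont : ∀ i, Continuous (ψ i))
    (hψ_per : ∀ i θ, ψ i (θ + 2 * π) = ψ i θ) :
    ∃ u : ℝ → ℝ,
      (∃ c : Fin (k + 1) → ℝ, ∀ θ, u θ = ∑ i : Fin (k + 1), c i * e i θ) ∧
      (¬ ∀ θ, u θ = 0) ∧
      (∫ θ in (0:ℝ)..(2 * π), f θ * u θ) = 0 ∧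
      (∀ i : Fin (k - 1), (∫ θ in (0:ℝ)..(2 * π), ψ i θ * u θ) = 0) ∧
      (∫ θ in (0:ℝ)..(2 * π), (deriv u θ) ^ 2) ≤
        (((k + 1) / 2 : ℕ) : ℝ) ^ 2 * ∫ θ in (0:ℝ)..(2 * π), (u θ) ^ 2 := by
  have hcard : Fintype.card (Option (Fin (k - 1))) ≤ k := by
    rw [Fintype.card_option, Fintype.card_fin, Nat.sub_add_cancel hk]
  obtain ⟨u, hspan, hu_ne, hortho, hle⟩ :=
    kth_f_eigenvalue_le_kth_eigenvalue_circle_general k e he0 he_cos he_sin hcard (·.elim f ψ)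
      (Option.forall.2
        ⟨hf_cont.intervalIntegrable _ _, fun i => (hψ_cont i).intervalIntegrable _ _⟩)
  exact ⟨u, hspan, hu_ne, hortho none, fun i => hortho (some i), hle⟩
end

section
/- Let f : ℝ → ℝ be a positive 2π-periodic C¹ function, and let u : ℝ → ℝ be a 2π-periodic C¹ function, not identically zero, with ∫₀^{2π} f(θ)u(θ) dθ = 0. Then (∫₀^{2π} (u')² dθ)/(∫₀^{2π} u² dθ) + (∫₀^{2π} (f')² dθ)/(∫₀^{2π} f² dθ) ≥ 1. -/
open Real

/-!
Expand a closed curve `g` on `[a, b]` in a Fourier series. Parseval's identity, together with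
`‖ĝ n‖ = (b - a) / (2π|n|) * ‖(g')^ n‖` for `n ≠ 0`, gives `l * (1 - c g) ≤ R g`, where
`l = (2π / (b - a))²` and `c g = ‖∫ g‖² / ((b - a) ∫ ‖g‖²)` is the squared cosine of the angle in
`L²` between `g` and the constant function `1`. If `f` and `u` are orthogonal, Bessel's inequality
for `1` says that `c u + c f ≤ 1`, and adding the two lower bounds gives `l ≤ R u + R f`.
-/

open MeasureTheory Set
open scoped ComplexConjugate

section Bessel

variable {𝕜 E : Type*} [RCLike 𝕜]

theorem sq_norm_inner_div_sq_norm_add_le [SeminormedAddCommGroup E]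
    [InnerProductSpace 𝕜 E] {x y : E} (hxy : inner 𝕜 x y = 0) (z : E) :
    ‖inner 𝕜 x z‖ ^ 2 / ‖x‖ ^ 2 + ‖inner 𝕜 y z‖ ^ 2 / ‖y‖ ^ 2 ≤ ‖z‖ ^ 2 := by
  set S : ℝ := ‖inner 𝕜 x z‖ ^ 2 / ‖x‖ ^ 2 + ‖inner 𝕜 y z‖ ^ 2 / ‖y‖ ^ 2 with hS
  -- The coefficients are those of the orthogonal projection of `z` onto the span of `x` and `y`.
  set α : 𝕜 := inner 𝕜 x z / (‖x‖ : 𝕜) ^ 2 with hα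
  set β : 𝕜 := inner 𝕜 y z / (‖y‖ : 𝕜) ^ 2 with hβ
  have inner_proj : inner 𝕜 (α • x + β • y) z = (S : 𝕜) := by
    simp only [hα, hβ, hS, inner_add_left, inner_smul_left, map_div₀, map_pow,
      RCLike.conj_ofReal, div_mul_eq_mul_div, RCLike.conj_mul]
    push_cast
    rfl
  have sq_norm_coeff (v : E) :
      ‖(inner 𝕜 v z / (‖v‖ : 𝕜) ^ 2) • v‖ ^ 2 = ‖inner 𝕜 v z‖ ^ 2 / ‖v‖ ^ 2 := by
    rcases eq_or_ne ‖v‖ 0 with hv | hv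
    · simp [hv]
    · simp only [norm_smul, norm_div, norm_pow, RCLike.norm_ofReal, abs_norm]
      field_simp
  have sq_norm_proj : ‖α • x + β • y‖ ^ 2 = S := by
    rw [norm_add_sq (𝕜 := 𝕜), sq_norm_coeff, sq_norm_coeff]
    simp [inner_smul_left, inner_smul_right, hxy, hS]
  have hS0 : 0 ≤ S := sq_norm_proj ▸ sq_nonneg _
  have cauchy_schwarz : S ≤ ‖α • x + β • y‖ * ‖z‖ := by
    simpa [inner_proj, abs_of_nonneg hS0] using norm_inner_le_norm (𝕜 := 𝕜) (α • x + β • y) z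
  linarith [two_mul_le_add_sq ‖α • x + β • y‖ ‖z‖]

variable [NormedAddCommGroup E] {X : Type*} [MeasurableSpace X] {μ : Measure X} {f g h : X → E}

theorem sq_norm_memLp_toLp (hf : MemLp f 2 μ) : ‖hf.toLp‖ ^ 2 = ∫ x, ‖f x‖ ^ 2 ∂μ := by
  rw [Lp.norm_toLp, hf.eLpNorm_eq_integral_rpow_norm two_ne_zero ENNReal.ofNat_ne_top,
    ENNReal.toReal_ofReal (by positivity), ENNReal.toReal_ofNat, ← rpow_mul_natCast (by positivity)]
  simp

variable [InnerProductSpace 𝕜 E]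

theorem inner_memLp_toLp (hf : MemLp f 2 μ) (hg : MemLp g 2 μ) :
    inner 𝕜 hf.toLp hg.toLp = ∫ x, inner 𝕜 (f x) (g x) ∂μ := by
  rw [L2.inner_def]
  refine integral_congr_ae ?_
  filter_upwards [hf.coeFn_toLp, hg.coeFn_toLp] with x hfx hgx
  rw [hfx, hgx]

theorem sq_norm_integral_inner_div_integral_sq_norm_add_le (hf : MemLp f 2 μ) (hg : MemLp g 2 μ)
    (hh : MemLp h 2 μ) (hfg : ∫ x, inner 𝕜 (f x) (g x) ∂μ = 0) :
    ‖∫ x, inner 𝕜 (f x) (h x) ∂μ‖ ^ 2 / ∫ x, ‖f x‖ ^ 2 ∂μ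
        + ‖∫ x, inner 𝕜 (g x) (h x) ∂μ‖ ^ 2 / ∫ x, ‖g x‖ ^ 2 ∂μ
      ≤ ∫ x, ‖h x‖ ^ 2 ∂μ := by
  simpa only [inner_memLp_toLp, sq_norm_memLp_toLp] using
    sq_norm_inner_div_sq_norm_add_le ((inner_memLp_toLp hf hg).trans hfg) hh.toLp

end Bessel

theorem memLp_restrict_Ioc_of_continuousOn_Icc {E : Type*} [NormedAddCommGroup E]
    {μ : Measure ℝ} [IsFiniteMeasureOnCompacts μ] {a b : ℝ} {g : ℝ → E}
    (hg : ContinuousOn g (Icc a b)) (p : ENNReal) : MemLp g p (μ.restrict (Ioc a b)) := by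
  obtain ⟨C, hC⟩ := isCompact_Icc.exists_bound_of_continuousOn hg
  have : IsFiniteMeasure (μ.restrict (Ioc a b)) := ⟨by simp [measure_Ioc_lt_top]⟩
  exact .of_bound ((hg.mono Ioc_subset_Icc_self).aestronglyMeasurable measurableSet_Ioc) C
    (ae_restrict_of_forall_mem measurableSet_Ioc fun x hx => hC x (Ioc_subset_Icc_self hx))

theorem fourierCoeffOn_zero {E : Type*} [NormedAddCommGroup E] [NormedSpace ℂ E] {a b : ℝ}
    (hab : a < b) (g : ℝ → E) :
    fourierCoeffOn hab g 0 = (b - a)⁻¹ • ∫ x in a..b, g x := by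
  simp [fourierCoeffOn_eq_integral]

theorem norm_fourierCoeffOn_of_hasDerivAt {a b : ℝ} (hab : a < b) {g g' : ℝ → ℂ}
    (hg : ContinuousOn g (Icc a b)) (hg' : ∀ x ∈ Ioo a b, HasDerivAt g (g' x) x)
    (hint : IntervalIntegrable g' volume a b) (hloop : g a = g b) {n : ℤ} (hn : n ≠ 0) :
    ‖fourierCoeffOn hab g n‖ = (b - a) / (2 * π * |(n : ℝ)|) * ‖fourierCoeffOn hab g' n‖ := by
  rw [← uIcc_of_le hab.le] at hg
  have norm_factor : ‖1 / (-2 * π * Complex.I * n)‖ = 1 / (2 * π * |(n : ℝ)|) := by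
    simp [abs_of_pos pi_pos]
  rw [fourierCoeffOn_of_hasDerivAt_Ioo hab hn hg (by simpa [hab.le] using hg') hint, hloop,
    sub_self, mul_zero, zero_sub, norm_mul, norm_neg, norm_mul, norm_factor, ← Complex.ofReal_sub,
    Complex.norm_real, norm_of_nonneg (sub_pos.2 hab).le]
  ring

/-- A closed curve `g : [a, b] → ℂ`, i.e. a function on the circle of length `b - a`, of finite
Dirichlet energy `∫ ‖g'‖²`. Differentiability is only required in the open interval, so that `g`
may have a corner at the base point. -/
structure IsFiniteEnergyLoop (a b : ℝ) (g : ℝ → ℂ) : Prop where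
  continuousOn : ContinuousOn g (Icc a b)
  differentiableAt : ∀ x ∈ Ioo a b, DifferentiableAt ℝ g x
  memLp_deriv : MemLp (deriv g) 2 (volume.restrict (Ioc a b))
  closed : g a = g b

/-- The Rayleigh quotient of `g` on the interval `[a, b]`, with the junk value `0` if
`∫ ‖g‖² = 0`. -/
noncomputable def rayleighQuotientOn (a b : ℝ) (g : ℝ → ℂ) : ℝ :=
  (∫ x in a..b, ‖deriv g x‖ ^ 2) / ∫ x in a..b, ‖g x‖ ^ 2

namespace IsFiniteEnergyLoop

variable {a b : ℝ} {f u g : ℝ → ℂ}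

theorem memLp (hg : IsFiniteEnergyLoop a b g) : MemLp g 2 (volume.restrict (Ioc a b)) :=
  memLp_restrict_Ioc_of_continuousOn_Icc hg.continuousOn 2

theorem norm_fourierCoeffOn_le (hg : IsFiniteEnergyLoop a b g) (hab : a < b) {n : ℤ} (hn : n ≠ 0) :
    ‖fourierCoeffOn hab g n‖ ≤ (b - a) / (2 * π) * ‖fourierCoeffOn hab (deriv g) n‖ := by
  have hint : IntervalIntegrable (deriv g) volume a b :=
    (intervalIntegrable_iff_integrableOn_Ioc_of_le hab.le).2
      (hg.memLp_deriv.integrable one_le_two)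
  have one_le_abs : (1 : ℝ) ≤ |(n : ℝ)| := mod_cast Int.one_le_abs hn
  rw [norm_fourierCoeffOn_of_hasDerivAt hab hg.continuousOn
    (fun x hx => (hg.differentiableAt x hx).hasDerivAt) hint hg.closed hn]
  have denom_le : 2 * π ≤ 2 * π * |(n : ℝ)| := le_mul_of_one_le_right two_pi_pos.le one_le_abs
  gcongr

theorem wirtinger_inequality (hg : IsFiniteEnergyLoop a b g) (hab : a < b) :
    ∫ x in a..b, ‖g x‖ ^ 2 ≤
      ((b - a) / (2 * π)) ^ 2 * (∫ x in a..b, ‖deriv g x‖ ^ 2)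
        + ‖∫ x in a..b, g x‖ ^ 2 / (b - a) := by
  have length_pos := sub_pos.2 hab
  have parseval := hasSum_sq_fourierCoeffOn hab hg.memLp
  have parseval_deriv := hasSum_sq_fourierCoeffOn hab hg.memLp_deriv
  have coeff_le (n : ℤ) : ‖fourierCoeffOn hab g n‖ ^ 2 ≤
      ((b - a) / (2 * π)) ^ 2 * ‖fourierCoeffOn hab (deriv g) n‖ ^ 2
        + if n = 0 then ‖fourierCoeffOn hab g 0‖ ^ 2 else 0 := by
    rcases eq_or_ne n 0 with rfl | hn
    · rw [if_pos rfl]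
      exact le_add_of_nonneg_left (by positivity)
    · rw [if_neg hn, add_zero, ← mul_pow]
      gcongr
      exact hg.norm_fourierCoeffOn_le hab hn
  have mean_sq_le := hasSum_le coeff_le parseval
    ((parseval_deriv.mul_left _).add (hasSum_ite_eq 0 _))
  rw [fourierCoeffOn_zero, norm_smul, mul_pow, norm_inv, norm_of_nonneg length_pos.le, smul_eq_mul,
    smul_eq_mul] at mean_sq_le
  calc ∫ x in a..b, ‖g x‖ ^ 2
      = (b - a) * ((b - a)⁻¹ * ∫ x in a..b, ‖g x‖ ^ 2) := by field_simp
    _ ≤ (b - a) * (((b - a) / (2 * π)) ^ 2 * ((b - a)⁻¹ * ∫ x in a..b, ‖deriv g x‖ ^ 2)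
          + (b - a)⁻¹ ^ 2 * ‖∫ x in a..b, g x‖ ^ 2) := by gcongr
    _ = _ := by field_simp

theorem mul_one_sub_le_rayleighQuotientOn (hg : IsFiniteEnergyLoop a b g) (hab : a < b)
    (hg₀ : ∃ x ∈ Icc a b, g x ≠ 0) :
    (2 * π / (b - a)) ^ 2 *
        (1 - (‖∫ x in a..b, g x‖ ^ 2 / ∫ x in a..b, ‖g x‖ ^ 2) / (b - a)) ≤
      rayleighQuotientOn a b g := by
  have length_pos := sub_pos.2 hab
  have sq_norm_pos : 0 < ∫ x in a..b, ‖g x‖ ^ 2 := by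
    obtain ⟨x, hx, hgx⟩ := hg₀
    exact intervalIntegral.integral_pos hab (hg.continuousOn.norm.pow 2)
      (fun x _ => sq_nonneg _) ⟨x, hx, by positivity⟩
  rw [rayleighQuotientOn, le_div_iff₀ sq_norm_pos]
  calc _ = (2 * π / (b - a)) ^ 2 *
        ((∫ x in a..b, ‖g x‖ ^ 2) - ‖∫ x in a..b, g x‖ ^ 2 / (b - a)) := by field_simp
    _ ≤ (2 * π / (b - a)) ^ 2 *
        (((b - a) / (2 * π)) ^ 2 * ∫ x in a..b, ‖deriv g x‖ ^ 2) := by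
      gcongr
      exact sub_le_iff_le_add.2 (hg.wirtinger_inequality hab)
    _ = ∫ x in a..b, ‖deriv g x‖ ^ 2 := by field_simp

theorem sq_norm_integral_div_integral_sq_norm_add_le (hf : IsFiniteEnergyLoop a b f)
    (hu : IsFiniteEnergyLoop a b u) (hab : a ≤ b) (hfu : ∫ x in a..b, conj (f x) * u x = 0) :
    ‖∫ x in a..b, f x‖ ^ 2 / (∫ x in a..b, ‖f x‖ ^ 2)
      + ‖∫ x in a..b, u x‖ ^ 2 / (∫ x in a..b, ‖u x‖ ^ 2) ≤ b - a := by
  simp only [intervalIntegral.integral_of_le hab] at hfu ⊢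
  have bessel := sq_norm_integral_inner_div_integral_sq_norm_add_le (𝕜 := ℂ) hf.memLp
    hu.memLp (memLp_const 1) (by simpa only [RCLike.inner_apply'] using hfu)
  simpa [integral_conj, hab] using bessel

end IsFiniteEnergyLoop

theorem rayleigh_quotient_sum_ge_one_circle_general {a b : ℝ} (hab : a < b) {f u : ℝ → ℂ}
    (hf : IsFiniteEnergyLoop a b f) (hf₀ : ∃ x ∈ Icc a b, f x ≠ 0)
    (hu : IsFiniteEnergyLoop a b u) (hu₀ : ∃ x ∈ Icc a b, u x ≠ 0)
    (hfu : ∫ x in a..b, conj (f x) * u x = 0) :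
    (2 * π / (b - a)) ^ 2 ≤ rayleighQuotientOn a b u + rayleighQuotientOn a b f := by
  have bessel := hf.sq_norm_integral_div_integral_sq_norm_add_le hu hab.le hfu
  have cos_sq_add_le := (div_le_one (sub_pos.2 hab)).2 bessel
  rw [add_div] at cos_sq_add_le
  have excess_nonneg := mul_nonneg (sq_nonneg (2 * π / (b - a))) (sub_nonneg.2 cos_sq_add_le)
  linarith [hf.mul_one_sub_le_rayleighQuotientOn hab hf₀,
    hu.mul_one_sub_le_rayleighQuotientOn hab hu₀]

theorem exists_mem_Icc_ne_zero_of_periodic {M : Type*} [Zero M] {g : ℝ → M} {T : ℝ} (hT : 0 < T)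
    (hg : Function.Periodic g T) (hg₀ : ∃ x, g x ≠ 0) : ∃ x ∈ Icc 0 T, g x ≠ 0 := by
  obtain ⟨x, hx⟩ := hg₀
  obtain ⟨y, hy, hxy⟩ := hg.exists_mem_Ico₀ hT x
  exact ⟨y, Ico_subset_Icc_self hy, hxy ▸ hx⟩

theorem intervalIntegral_conj_ofReal_mul_ofReal (f u : ℝ → ℝ) (a b : ℝ) :
    ∫ x in a..b, conj (f x : ℂ) * (u x : ℂ) = ((∫ x in a..b, f x * u x : ℝ) : ℂ) := by
  simp only [Complex.conj_ofReal, ← Complex.ofReal_mul, intervalIntegral.integral_ofReal]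

section RealValued

variable {g : ℝ → ℝ}

theorem deriv_ofReal_comp (hg : Differentiable ℝ g) :
    deriv (fun x => (g x : ℂ)) = fun x => ((deriv g x : ℝ) : ℂ) :=
  funext fun x => (hg x).hasDerivAt.ofReal_comp.deriv

theorem rayleighQuotientOn_ofReal (hg : Differentiable ℝ g) (a b : ℝ) :
    rayleighQuotientOn a b (fun x => (g x : ℂ)) =
      (∫ x in a..b, deriv g x ^ 2) / ∫ x in a..b, g x ^ 2 := by
  simp [rayleighQuotientOn, deriv_ofReal_comp hg]

theorem isFiniteEnergyLoop_ofReal_of_periodic {T : ℝ} (hg_per : Function.Periodic g T)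
    (hg : ContDiff ℝ 1 g) : IsFiniteEnergyLoop 0 T (fun x => (g x : ℂ)) where
  continuousOn := (Complex.continuous_ofReal.comp hg.continuous).continuousOn
  differentiableAt x _ := (hg.differentiable_one x).hasDerivAt.ofReal_comp.differentiableAt
  memLp_deriv := by
    have hcont : Continuous (fun x => ((deriv g x : ℝ) : ℂ)) :=
      Complex.continuous_ofReal.comp hg.continuous_deriv_one
    rw [deriv_ofReal_comp hg.differentiable_one]
    exact memLp_restrict_Ioc_of_continuousOn_Icc hcont.continuousOn 2
  closed := by rw [hg_per.eq]

end RealValued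

theorem rayleigh_quotient_sum_ge_one_circle
    (f u : ℝ → ℝ)
    (hf_pos : ∀ θ, 0 < f θ)
    (hf_per : ∀ θ, f (θ + 2 * π) = f θ)
    (hf_C1 : ContDiff ℝ 1 f)
    (hu_per : ∀ θ, u (θ + 2 * π) = u θ)
    (hu_C1 : ContDiff ℝ 1 u)
    (hu_ne : ¬ ∀ θ, u θ = 0)
    (hfu : ∫ θ in (0:ℝ)..(2 * π), f θ * u θ = 0) :
    1 ≤ (∫ θ in (0:ℝ)..(2 * π), (deriv u θ) ^ 2) / (∫ θ in (0:ℝ)..(2 * π), (u θ) ^ 2) +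
        (∫ θ in (0:ℝ)..(2 * π), (deriv f θ) ^ 2) / (∫ θ in (0:ℝ)..(2 * π), (f θ) ^ 2) := by
  have hf₀ := exists_mem_Icc_ne_zero_of_periodic two_pi_pos hf_per ⟨0, (hf_pos 0).ne'⟩
  have hu₀ := exists_mem_Icc_ne_zero_of_periodic two_pi_pos hu_per (not_forall.1 hu_ne)
  simpa [rayleighQuotientOn_ofReal, hf_C1.differentiable_one, hu_C1.differentiable_one] using
    rayleigh_quotient_sum_ge_one_circle_general two_pi_pos
      (isFiniteEnergyLoop_ofReal_of_periodic hf_per hf_C1) (mod_cast hf₀)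
      (isFiniteEnergyLoop_ofReal_of_periodic hu_per hu_C1) (mod_cast hu₀)
      (by rw [intervalIntegral_conj_ofReal_mul_ofReal, hfu, Complex.ofReal_zero])
end

section
/- Let φ : ℝ → ℝ be a continuous 2π-periodic function that attains both strictly positive and strictly negative values. Then there exists a continuous 2π-periodic function f : ℝ → ℝ with f > 0 everywhere and ∫₀^{2π} f(θ)φ(θ) dθ = 0. -/
open Real

/-!
Weight `φ` by the positive function `sigmoid (t * φ)`. By dominated convergence the integral of
`sigmoid (t * φ) * φ` depends continuously on `t`, tends to `∫ φ⁺ > 0` as `t → ∞` and to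
`-∫ φ⁻ < 0` as `t → -∞`, so it vanishes for some `t`. This weight is a function of `φ` alone, so it
inherits continuity and periodicity from `φ`.
-/

open Filter MeasureTheory Set
open scoped Topology

lemma abs_sigmoid_mul_le_abs (s y : ℝ) : |sigmoid s * y| ≤ |y| := by
  rw [abs_mul, abs_of_pos (sigmoid_pos s)]
  exact mul_le_of_le_one_left (abs_nonneg y) (sigmoid_le_one s)

lemma tendsto_sigmoid_mul_mul_self_atTop (y : ℝ) :
    Tendsto (fun t ↦ sigmoid (t * y) * y) atTop (𝓝 y⁺) := by
  rcases lt_trichotomy y 0 with hy | rfl | hy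
  · simpa [posPart_of_nonpos hy.le] using
      (tendsto_sigmoid_atBot.comp (tendsto_id.atTop_mul_const_of_neg hy)).mul_const y
  · simp
  · simpa [posPart_of_nonneg hy.le] using
      (tendsto_sigmoid_atTop.comp (tendsto_id.atTop_mul_const hy)).mul_const y

section Integral

variable {α : Type*} [MeasurableSpace α] {μ : Measure α} {φ : α → ℝ}

lemma aestronglyMeasurable_sigmoid_mul_mul_self (hφ : AEStronglyMeasurable φ μ) (t : ℝ) :
    AEStronglyMeasurable (fun x ↦ sigmoid (t * φ x) * φ x) μ :=
  (continuous_sigmoid.comp_aestronglyMeasurable (hφ.const_mul t)).mul hφ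

lemma continuous_integral_sigmoid_mul_mul_self (hφ : Integrable φ μ) :
    Continuous fun t ↦ ∫ x, sigmoid (t * φ x) * φ x ∂μ :=
  continuous_of_dominated (aestronglyMeasurable_sigmoid_mul_mul_self hφ.1)
    (fun _ ↦ .of_forall fun _ ↦ abs_sigmoid_mul_le_abs _ _) hφ.abs
    (.of_forall fun _ ↦ by fun_prop)

lemma tendsto_integral_sigmoid_mul_mul_self_atTop (hφ : Integrable φ μ) :
    Tendsto (fun t ↦ ∫ x, sigmoid (t * φ x) * φ x ∂μ) atTop (𝓝 (∫ x, (φ x)⁺ ∂μ)) :=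
  tendsto_integral_filter_of_dominated_convergence (fun x ↦ |φ x|)
    (.of_forall (aestronglyMeasurable_sigmoid_mul_mul_self hφ.1))
    (.of_forall fun _ ↦ .of_forall fun _ ↦ abs_sigmoid_mul_le_abs _ _) hφ.abs
    (.of_forall fun _ ↦ tendsto_sigmoid_mul_mul_self_atTop _)

lemma tendsto_integral_sigmoid_mul_mul_self_atBot (hφ : Integrable φ μ) :
    Tendsto (fun t ↦ ∫ x, sigmoid (t * φ x) * φ x ∂μ) atBot (𝓝 (-∫ x, (φ x)⁻ ∂μ)) := by
  -- The integral changes sign under `(t, φ) ↦ (-t, -φ)`.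
  simpa [Function.comp_def, integral_neg, posPart_neg] using
    ((tendsto_integral_sigmoid_mul_mul_self_atTop hφ.neg).comp tendsto_neg_atBot_atTop).neg

lemma exists_integral_sigmoid_mul_mul_self_eq_zero (hφ : Integrable φ μ)
    (hpos : 0 < ∫ x, (φ x)⁺ ∂μ) (hneg : 0 < ∫ x, (φ x)⁻ ∂μ) :
    ∃ t, ∫ x, sigmoid (t * φ x) * φ x ∂μ = 0 :=
  mem_range_of_exists_le_of_exists_ge (continuous_integral_sigmoid_mul_mul_self hφ)
    ((tendsto_integral_sigmoid_mul_mul_self_atBot hφ).eventually_le_const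
      (neg_neg_of_pos hneg)).exists
    ((tendsto_integral_sigmoid_mul_mul_self_atTop hφ).eventually_const_le hpos).exists

end Integral

section Interval

variable {φ : ℝ → ℝ} {a b : ℝ}

lemma intervalIntegral_posPart_pos (hab : a < b) (hφ : ContinuousOn φ (Icc a b))
    (hpos : ∃ x ∈ Icc a b, 0 < φ x) : 0 < ∫ x in a..b, (φ x)⁺ := by
  obtain ⟨x, hx, hφx⟩ := hpos
  exact intervalIntegral.integral_pos hab (hφ.sup continuousOn_const)
    (fun _ _ ↦ posPart_nonneg _) ⟨x, hx, posPart_pos hφx⟩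

lemma exists_intervalIntegral_sigmoid_mul_mul_self_eq_zero (hab : a < b)
    (hφ : ContinuousOn φ (Icc a b)) (hpos : ∃ x ∈ Icc a b, 0 < φ x)
    (hneg : ∃ x ∈ Icc a b, φ x < 0) :
    ∃ t, ∫ x in a..b, sigmoid (t * φ x) * φ x = 0 := by
  have hposPart : 0 < ∫ x in a..b, (φ x)⁺ := intervalIntegral_posPart_pos hab hφ hpos
  have hnegPart : 0 < ∫ x in a..b, (φ x)⁻ := by
    simpa [posPart_neg] using intervalIntegral_posPart_pos hab hφ.neg (by simpa using hneg)
  simp only [intervalIntegral.integral_of_le hab.le] at hposPart hnegPart ⊢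
  exact exists_integral_sigmoid_mul_mul_self_eq_zero
    (hφ.integrableOn_Icc.mono_set Ioc_subset_Icc_self) hposPart hnegPart

end Interval

theorem exists_positive_orthogonal_to_sign_changing_general {φ : ℝ → ℝ} {T : ℝ} (hT : 0 < T)
    (hφ_cont : Continuous φ) (hφ_per : Function.Periodic φ T)
    (hφ_pos : ∃ θ, 0 < φ θ) (hφ_neg : ∃ θ, φ θ < 0) :
    ∃ f : ℝ → ℝ, Continuous f ∧ Function.Periodic f T ∧ (∀ θ, 0 < f θ) ∧
      ∫ θ in (0 : ℝ)..T, f θ * φ θ = 0 := by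
  have exists_mem_Icc (θ : ℝ) : ∃ x ∈ Icc 0 T, φ θ = φ x :=
    (hφ_per.exists_mem_Ico₀ hT θ).imp fun _ ↦ And.imp_left (Ico_subset_Icc_self ·)
  obtain ⟨p, hp⟩ := hφ_pos
  obtain ⟨n, hn⟩ := hφ_neg
  obtain ⟨x, hx, hpx⟩ := exists_mem_Icc p
  obtain ⟨y, hy, hny⟩ := exists_mem_Icc n
  obtain ⟨t, ht⟩ := exists_intervalIntegral_sigmoid_mul_mul_self_eq_zero hT hφ_cont.continuousOn
    ⟨x, hx, hpx ▸ hp⟩ ⟨y, hy, hny ▸ hn⟩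
  exact ⟨fun θ ↦ sigmoid (t * φ θ), by fun_prop, hφ_per.comp fun y ↦ sigmoid (t * y),
    fun _ ↦ sigmoid_pos _, ht⟩

theorem exists_positive_orthogonal_to_sign_changing
    (φ : ℝ → ℝ)
    (hφ_cont : Continuous φ)
    (hφ_per : ∀ θ, φ (θ + 2 * π) = φ θ)
    (hφ_pos : ∃ θ, 0 < φ θ)
    (hφ_neg : ∃ θ, φ θ < 0) :
    ∃ f : ℝ → ℝ, Continuous f ∧ (∀ θ, f (θ + 2 * π) = f θ) ∧
      (∀ θ, 0 < f θ) ∧ (∫ θ in (0:ℝ)..(2 * π), f θ * φ θ) = 0 :=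
  exists_positive_orthogonal_to_sign_changing_general two_pi_pos hφ_cont hφ_per hφ_pos hφ_neg
end

section
/- There exist smooth functions f, φ : ℝ² → ℝ, each 2π-periodic in both variables, such that: f(x,y) > 0 for all (x,y); ∫₀^{2π}∫₀^{2π} f(x,y)cos x dx dy = ∫₀^{2π}∫₀^{2π} f(x,y)sin x dx dy = ∫₀^{2π}∫₀^{2π} f(x,y)cos y dx dy = ∫₀^{2π}∫₀^{2π} f(x,y)sin y dx dy = 0; ∫₀^{2π}∫₀^{2π} f(x,y)φ(x,y) dx dy = 0; and ∫₀^{2π}∫₀^{2π} [(∂φ/∂x)² + (∂φ/∂y)²] dx dy < ∫₀^{2π}∫₀^{2π} φ(x,y)² dx dy. -/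
open Real

/-!
Let `H = -Δ - 1`, whose kernel is the first eigenspace. Given `f = 1 + H w` with `w` of mean zero,
test with `φ = c - w`. Symmetry of `H` makes `f` orthogonal to the first eigenspace and gives
`∫ f φ = 4π² c - ∫ w H w`, so `f ⊥ φ` forces `c` to be the mean of `w H w`. Green's identity then
gives `∫ (|∇φ|² - φ²) = ∫ φ H φ = 4π² c (1 - c)`. It thus suffices to find `w` with `f > 0` and
`c > 1`; the choice `f = (1 + a cos (x + y)) (1 + a cos (x - y))` has `c = a² + a⁴ / 12`, which
exceeds `1` for `a < 1` close to `1`.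
-/

open scoped ContDiff

/-- The algebra `C^∞(T²)` of smooth functions on the square flat torus, encoded as smooth functions
on the plane that are `2π`-periodic in both variables. -/
def torusFunctions : Subalgebra ℝ (ℝ × ℝ → ℝ) where
  carrier := {u | ContDiff ℝ ∞ u ∧ u.Periodic (2 * π, 0) ∧ u.Periodic (0, 2 * π)}
  mul_mem' hu hv := ⟨hu.1.mul hv.1, hu.2.1.mul hv.2.1, hu.2.2.mul hv.2.2⟩
  add_mem' hu hv := ⟨hu.1.add hv.1, hu.2.1.add hv.2.1, hu.2.2.add hv.2.2⟩
  algebraMap_mem' _ := ⟨contDiff_const, fun _ => rfl, fun _ => rfl⟩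

/-- A smooth function on the square flat torus. -/
abbrev TorusFunction : Type := torusFunctions

namespace TorusFunction

open MeasureTheory Set

instance : CoeFun TorusFunction fun _ => ℝ × ℝ → ℝ := ⟨Subtype.val⟩

theorem contDiff (u : TorusFunction) : ContDiff ℝ ∞ u := u.2.1

theorem differentiable (u : TorusFunction) : Differentiable ℝ u :=
  u.contDiff.differentiable (by simp)

theorem periodic_fst (u : TorusFunction) (x y : ℝ) : u (x + 2 * π, y) = u (x, y) := by
  simpa using u.2.2.1 (x, y)

theorem periodic_snd (u : TorusFunction) (x y : ℝ) : u (x, y + 2 * π) = u (x, y) := by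
  simpa using u.2.2.2 (x, y)

theorem integrableOn_Icc (u : TorusFunction) (a b : ℝ × ℝ) : IntegrableOn u (Icc a b) :=
  u.contDiff.continuous.integrableOn_Icc

/-- The directional derivative `∂ᵥ`, as a derivation of the algebra `C^∞(T²)`. -/
noncomputable def dirDeriv (v : ℝ × ℝ) : Derivation ℝ TorusFunction TorusFunction :=
  Derivation.mk'
    { toFun u := ⟨fun p => fderiv ℝ u p v,
        (u.contDiff.fderiv_right (m := ∞) le_rfl).clm_apply contDiff_const,
        fun p => by simp only [← fderiv_comp_add_right, u.2.2.1 _],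
        fun p => by simp only [← fderiv_comp_add_right, u.2.2.2 _]⟩
      map_add' u w := by
        ext p
        simp [fderiv_add (u.differentiable p) (w.differentiable p)]
      map_smul' r u := by
        ext p
        simp [fderiv_const_smul (u.differentiable p)] }
    fun u w => by
      ext p
      simp [fderiv_mul (u.differentiable p) (w.differentiable p)]

theorem dirDeriv_apply (v : ℝ × ℝ) (u : TorusFunction) (p : ℝ × ℝ) :
    dirDeriv v u p = fderiv ℝ u p v := rfl

theorem deriv_fst (u : TorusFunction) (x y : ℝ) :
    deriv (fun t => u (t, y)) x = dirDeriv (1, 0) u (x, y) :=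
  ((u.differentiable (x, y)).hasFDerivAt.comp_hasDerivAt x
    ((hasDerivAt_id x).prodMk (hasDerivAt_const x y))).deriv

theorem deriv_snd (u : TorusFunction) (x y : ℝ) :
    deriv (fun t => u (x, t)) y = dirDeriv (0, 1) u (x, y) :=
  ((u.differentiable (x, y)).hasFDerivAt.comp_hasDerivAt y
    ((hasDerivAt_const y x).prodMk (hasDerivAt_id y))).deriv

/-- Integration over the torus, i.e. over the fundamental square `[0, 2π]²`, as a linear form. -/
noncomputable def integral : TorusFunction →ₗ[ℝ] ℝ where
  toFun u := ∫ p in Icc (0, 0) (2 * π, 2 * π), u p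
  map_add' u v := integral_add (u.integrableOn_Icc _ _) (v.integrableOn_Icc _ _)
  map_smul' r u := integral_const_mul r u

theorem intervalIntegral_eq_integral (u : TorusFunction) :
    ∫ y in (0:ℝ)..(2 * π), ∫ x in (0:ℝ)..(2 * π), u (x, y) = integral u := by
  have hint : IntegrableOn (u ∘ Prod.swap) (Icc 0 (2 * π) ×ˢ Icc 0 (2 * π)) := by
    rw [Icc_prod_Icc]
    exact (u.contDiff.continuous.comp continuous_swap).integrableOn_Icc
  simp only [intervalIntegral.integral_of_le two_pi_pos.le, ← integral_Icc_eq_integral_Ioc]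
  calc _ = ∫ p in Icc 0 (2 * π) ×ˢ Icc 0 (2 * π), u p.swap := (setIntegral_prod _ hint).symm
    _ = ∫ p in Icc 0 (2 * π) ×ˢ Icc 0 (2 * π), u p := setIntegral_prod_swap _ _ _
    _ = integral u := by rw [Icc_prod_Icc]; rfl

theorem integral_one : integral 1 = 4 * π ^ 2 := by
  rw [← intervalIntegral_eq_integral]
  simp only [OneMemClass.coe_one, Pi.one_apply, intervalIntegral.integral_const, sub_zero,
    smul_eq_mul]
  ring

theorem integral_dirDeriv (v : ℝ × ℝ) (u : TorusFunction) : integral (dirDeriv v u) = 0 := by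
  have hsplit (p : ℝ × ℝ) :
      dirDeriv v u p = (v.1 • fderiv ℝ u p) (1, 0) + (v.2 • fderiv ℝ u p) (0, 1) := by
    rw [dirDeriv_apply]
    conv_lhs => rw [show v = v.1 • (1, 0) + v.2 • (0, 1) by ext <;> simp]
    rw [map_add, map_smul, map_smul]
    rfl
  have hdiv := integral_divergence_prod_Icc_of_hasFDerivAt_of_le (v.1 • u) (v.2 • u)
    (fun p => v.1 • fderiv ℝ u p) (fun p => v.2 • fderiv ℝ u p) (0, 0) (2 * π, 2 * π)
    ⟨two_pi_pos.le, two_pi_pos.le⟩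
    (u.contDiff.continuous.const_smul _).continuousOn
    (u.contDiff.continuous.const_smul _).continuousOn
    (fun p _ => (u.differentiable p).hasFDerivAt.const_smul _)
    (fun p _ => (u.differentiable p).hasFDerivAt.const_smul _)
    (by simpa only [← hsplit] using (dirDeriv v u).integrableOn_Icc _ _)
  simp only [← hsplit] at hdiv
  refine hdiv.trans ?_
  have hx (x : ℝ) : u (x, 2 * π) = u (x, 0) := by simpa using u.periodic_snd x 0
  have hy (y : ℝ) : u (2 * π, y) = u (0, y) := by simpa using u.periodic_fst 0 y
  simp [hx, hy]

theorem integral_dirDeriv_mul (v : ℝ × ℝ) (u w : TorusFunction) :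
    integral (dirDeriv v u * w) = -integral (u * dirDeriv v w) := by
  have h := integral_dirDeriv v (u * w)
  simp only [Derivation.leibniz, smul_eq_mul, map_add] at h
  rw [mul_comm]
  linarith

/-- The Laplacian `Δ = ∂²/∂x² + ∂²/∂y²`. -/
noncomputable def laplacian : Module.End ℝ TorusFunction :=
  (dirDeriv (1, 0)).toLinearMap ^ 2 + (dirDeriv (0, 1)).toLinearMap ^ 2

theorem laplacian_apply (u : TorusFunction) :
    laplacian u = dirDeriv (1, 0) (dirDeriv (1, 0) u) + dirDeriv (0, 1) (dirDeriv (0, 1) u) := by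
  simp [laplacian, pow_two]

theorem green_identity (u w : TorusFunction) :
    integral (dirDeriv (1, 0) u * dirDeriv (1, 0) w + dirDeriv (0, 1) u * dirDeriv (0, 1) w) =
      -integral (u * laplacian w) := by
  rw [laplacian_apply, mul_add, map_add, map_add, integral_dirDeriv_mul, integral_dirDeriv_mul,
    neg_add]

theorem integral_mul_laplacian_comm (u w : TorusFunction) :
    integral (u * laplacian w) = integral (w * laplacian u) := by
  rw [← neg_inj, ← green_identity, ← green_identity]
  simp only [mul_comm]

theorem integral_laplacian (u : TorusFunction) : integral (laplacian u) = 0 := by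
  rw [laplacian_apply, map_add, integral_dirDeriv, integral_dirDeriv, add_zero]

/-- The operator `-Δ - λ₁`, where `λ₁ = 1`; its kernel is the first eigenspace of the torus. -/
noncomputable def helmholtz : Module.End ℝ TorusFunction := -laplacian - 1

theorem helmholtz_apply (u : TorusFunction) : helmholtz u = -laplacian u - u := rfl

theorem helmholtz_one : helmholtz 1 = -1 := by
  simp [helmholtz_apply, laplacian_apply]

theorem integral_helmholtz (u : TorusFunction) : integral (helmholtz u) = -integral u := by
  rw [helmholtz_apply, map_sub, map_neg, integral_laplacian, neg_zero, zero_sub]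

theorem integral_mul_helmholtz (u w : TorusFunction) :
    integral (u * helmholtz w) = -integral (u * laplacian w) - integral (u * w) := by
  have hexpand : u * helmholtz w = -(u * laplacian w) - u * w := by
    rw [helmholtz_apply]
    ring
  rw [hexpand, map_sub, map_neg]

theorem integral_mul_helmholtz_comm (u w : TorusFunction) :
    integral (u * helmholtz w) = integral (w * helmholtz u) := by
  rw [integral_mul_helmholtz, integral_mul_helmholtz, integral_mul_laplacian_comm, mul_comm u w]

/-- The Dirichlet energy `∫ |∇u|²`. -/
noncomputable def dirichletEnergy (u : TorusFunction) : ℝ :=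
  integral (dirDeriv (1, 0) u ^ 2 + dirDeriv (0, 1) u ^ 2)

theorem dirichletEnergy_eq (u : TorusFunction) :
    dirichletEnergy u = integral (u ^ 2) + integral (u * helmholtz u) := by
  rw [dirichletEnergy, pow_two, pow_two, green_identity, integral_mul_helmholtz, pow_two]
  ring

theorem integral_one_add_helmholtz_mul_eq_zero (w : TorusFunction) {u : TorusFunction}
    (hu : helmholtz u = 0) : integral ((1 + helmholtz w) * u) = 0 := by
  have hmean : integral u = 0 := by rw [← neg_eq_zero, ← integral_helmholtz, hu, map_zero]
  rw [add_mul, one_mul, map_add, hmean, mul_comm, integral_mul_helmholtz_comm, hu, mul_zero,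
    map_zero, add_zero]

theorem integral_one_add_helmholtz_mul_smul_one_sub {w : TorusFunction} (hw : integral w = 0)
    (c : ℝ) :
    integral ((1 + helmholtz w) * (c • 1 - w)) = 4 * π ^ 2 * c - integral (w * helmholtz w) := by
  have hexpand : (1 + helmholtz w) * (c • 1 - w) =
      c • 1 - w + c • helmholtz w - w * helmholtz w := by
    simp only [Algebra.smul_def]
    ring
  rw [hexpand]
  simp only [map_add, map_sub, map_smul, integral_helmholtz, integral_one, hw, smul_eq_mul]
  ring

theorem integral_smul_one_sub_mul_helmholtz {w : TorusFunction} (hw : integral w = 0) (c : ℝ) :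
    integral ((c • 1 - w) * helmholtz (c • 1 - w)) =
      integral (w * helmholtz w) - 4 * π ^ 2 * c ^ 2 := by
  have hexpand : (c • 1 - w) * helmholtz (c • 1 - w) =
      c • w - c ^ 2 • 1 - c • helmholtz w + w * helmholtz w := by
    rw [map_sub, LinearMap.map_smul, helmholtz_one]
    simp only [Algebra.smul_def, map_pow]
    ring
  rw [hexpand]
  simp only [map_add, map_sub, map_smul, integral_helmholtz, integral_one, hw, smul_eq_mul]
  ring

theorem dirichletEnergy_smul_one_sub_lt {w : TorusFunction} {c : ℝ} (hc : 1 < c)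
    (hw : integral w = 0) (hwc : integral (w * helmholtz w) = 4 * π ^ 2 * c) :
    dirichletEnergy (c • 1 - w) < integral ((c • 1 - w) ^ 2) := by
  have hpos : 0 < 4 * π ^ 2 * (c * (c - 1)) :=
    mul_pos (by positivity) (mul_pos (by linarith) (by linarith))
  rw [dirichletEnergy_eq, integral_smul_one_sub_mul_helmholtz hw, hwc]
  linarith

/-- The plane wave `cos (θ + k₁ x + k₂ y)`. The phase `θ` makes one family contain the cosines and
the sines. -/
noncomputable def planeWave (θ : ℝ) (k : ℤ × ℤ) : TorusFunction :=
  ⟨fun p => cos (θ + k.1 * p.1 + k.2 * p.2), by fun_prop,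
    fun p => by
      refine .trans ?_ (cos_add_int_mul_two_pi _ k.1)
      simp only [Prod.fst_add, Prod.snd_add]
      ring_nf,
    fun p => by
      refine .trans ?_ (cos_add_int_mul_two_pi _ k.2)
      simp only [Prod.fst_add, Prod.snd_add]
      ring_nf⟩

theorem planeWave_apply (θ : ℝ) (k : ℤ × ℤ) (p : ℝ × ℝ) :
    planeWave θ k p = cos (θ + k.1 * p.1 + k.2 * p.2) := rfl

theorem dirDeriv_planeWave (v : ℝ × ℝ) (θ : ℝ) (k : ℤ × ℤ) :
    dirDeriv v (planeWave θ k) = (k.1 * v.1 + k.2 * v.2) • planeWave (θ + π / 2) k := by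
  ext p
  have hphase : HasFDerivAt (fun q : ℝ × ℝ => θ + k.1 * q.1 + k.2 * q.2)
      ((k.1 : ℝ) • ContinuousLinearMap.fst ℝ ℝ ℝ + (k.2 : ℝ) • ContinuousLinearMap.snd ℝ ℝ ℝ) p :=
    ((hasFDerivAt_fst.const_mul _).const_add θ).add (hasFDerivAt_snd.const_mul _)
  have hshift : cos (θ + π / 2 + k.1 * p.1 + k.2 * p.2) = -sin (θ + k.1 * p.1 + k.2 * p.2) := by
    rw [← cos_add_pi_div_two]
    ring_nf
  calc dirDeriv v (planeWave θ k) p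
      = -sin (θ + k.1 * p.1 + k.2 * p.2) * (k.1 * v.1 + k.2 * v.2) :=
        congrArg (· v) hphase.cos.fderiv
    _ = (k.1 * v.1 + k.2 * v.2) * planeWave (θ + π / 2) k p := by
        rw [planeWave_apply, hshift, mul_comm]

theorem planeWave_add_pi (θ : ℝ) (k : ℤ × ℤ) : planeWave (θ + π) k = -planeWave θ k := by
  ext p
  simpa [planeWave_apply, add_right_comm] using cos_add_pi (θ + k.1 * p.1 + k.2 * p.2)

theorem laplacian_planeWave (θ : ℝ) (k : ℤ × ℤ) :
    laplacian (planeWave θ k) = -(k.1 ^ 2 + k.2 ^ 2 : ℝ) • planeWave θ k := by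
  simp only [laplacian_apply, dirDeriv_planeWave, Derivation.map_smul, add_assoc θ, add_halves,
    planeWave_add_pi, smul_smul]
  module

theorem helmholtz_planeWave (θ : ℝ) (k : ℤ × ℤ) :
    helmholtz (planeWave θ k) = (k.1 ^ 2 + k.2 ^ 2 - 1 : ℝ) • planeWave θ k := by
  rw [helmholtz_apply, laplacian_planeWave]
  module

theorem helmholtz_planeWave_eq_zero (θ : ℝ) {k : ℤ × ℤ} (hk : k.1 ^ 2 + k.2 ^ 2 = 1) :
    helmholtz (planeWave θ k) = 0 := by
  rw [helmholtz_planeWave, show (k.1 ^ 2 + k.2 ^ 2 : ℝ) = 1 by exact_mod_cast hk, sub_self,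
    zero_smul]

theorem planeWave_mul (θ η : ℝ) (k l : ℤ × ℤ) :
    planeWave θ k * planeWave η l =
      (1 / 2 : ℝ) • (planeWave (θ + η) (k + l) + planeWave (θ - η) (k - l)) := by
  ext p
  set α := θ + k.1 * p.1 + k.2 * p.2 with hα
  set β := η + l.1 * p.1 + l.2 * p.2 with hβ
  have hadd : planeWave (θ + η) (k + l) p = cos (α + β) := by
    rw [planeWave_apply, Prod.fst_add, Prod.snd_add, hα, hβ]
    push_cast
    ring_nf
  have hsub : planeWave (θ - η) (k - l) p = cos (α - β) := by
    rw [planeWave_apply, Prod.fst_sub, Prod.snd_sub, hα, hβ]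
    push_cast
    ring_nf
  change cos α * cos β = 1 / 2 * (planeWave (θ + η) (k + l) p + planeWave (θ - η) (k - l) p)
  rw [hadd, hsub]
  linarith [two_mul_cos_mul_cos α β]

theorem integral_planeWave_of_ne_zero (θ : ℝ) {k : ℤ × ℤ} (hk : k ≠ 0) :
    integral (planeWave θ k) = 0 := by
  have hnorm : (k.1 ^ 2 + k.2 ^ 2 : ℝ) ≠ 0 := by
    intro h
    norm_cast at h
    rw [add_eq_zero_iff_of_nonneg (sq_nonneg _) (sq_nonneg _), sq_eq_zero_iff, sq_eq_zero_iff] at h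
    exact hk (Prod.ext h.1 h.2)
  have h := integral_laplacian (planeWave θ k)
  rw [laplacian_planeWave, map_smul, smul_eq_mul] at h
  exact (mul_eq_zero.1 h).resolve_left (neg_ne_zero.2 hnorm)

theorem planeWave_zero_zero : planeWave 0 0 = 1 := by
  ext p
  simp [planeWave_apply]

theorem integral_planeWave_mul_self (θ : ℝ) {k : ℤ × ℤ} (hk : k ≠ 0) :
    integral (planeWave θ k * planeWave θ k) = 2 * π ^ 2 := by
  have hk_add : k + k ≠ 0 := by
    rw [← two_nsmul]
    exact smul_ne_zero two_ne_zero hk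
  rw [planeWave_mul, map_smul, map_add, integral_planeWave_of_ne_zero _ hk_add, sub_self,
    sub_self, planeWave_zero_zero, integral_one, smul_eq_mul]
  ring

theorem integral_planeWave_mul_of_ne (θ η : ℝ) {k l : ℤ × ℤ} (hne : k ≠ l) (hne_neg : k ≠ -l) :
    integral (planeWave θ k * planeWave η l) = 0 := by
  rw [planeWave_mul, map_smul, map_add, integral_planeWave_of_ne_zero _ (sub_ne_zero.2 hne),
    integral_planeWave_of_ne_zero _ (mt eq_neg_of_add_eq_zero_left hne_neg), add_zero, smul_zero]

/-- The `w` with `1 + helmholtz w = (1 + a cos (x + y)) (1 + a cos (x - y))`, found by dividing the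
Fourier coefficients of the right-hand side by `|k|² - 1`. -/
noncomputable def potential (a : ℝ) : TorusFunction :=
  a • (planeWave 0 (1, 1) + planeWave 0 (1, -1)) +
    (a ^ 2 / 6) • (planeWave 0 (2, 0) + planeWave 0 (0, 2))

theorem helmholtz_potential (a : ℝ) :
    helmholtz (potential a) = a • (planeWave 0 (1, 1) + planeWave 0 (1, -1)) +
      (a ^ 2 / 2) • (planeWave 0 (2, 0) + planeWave 0 (0, 2)) := by
  simp only [potential, map_add, map_smul, helmholtz_planeWave]
  push_cast
  module

theorem one_add_helmholtz_potential (a : ℝ) :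
    1 + helmholtz (potential a) =
      (1 + a • planeWave 0 (1, 1)) * (1 + a • planeWave 0 (1, -1)) := by
  have hprod : planeWave 0 (1, 1) * planeWave 0 (1, -1) =
      (1 / 2 : ℝ) • (planeWave 0 (2, 0) + planeWave 0 (0, 2)) := by
    simpa using planeWave_mul 0 0 (1, 1) (1, -1)
  rw [helmholtz_potential, add_mul, one_mul, mul_add, mul_one, smul_mul_smul_comm, hprod]
  module

theorem one_add_smul_planeWave_pos {a : ℝ} (ha : |a| < 1) (θ : ℝ) (k : ℤ × ℤ) (p : ℝ × ℝ) :
    0 < (1 + a • planeWave θ k) p := by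
  have h : |a * cos (θ + k.1 * p.1 + k.2 * p.2)| < 1 := by
    rw [abs_mul]
    exact (mul_le_of_le_one_right (abs_nonneg a) (abs_cos_le_one _)).trans_lt ha
  change 0 < 1 + a * cos (θ + k.1 * p.1 + k.2 * p.2)
  linarith [neg_lt_of_abs_lt h]

theorem integral_potential (a : ℝ) : integral (potential a) = 0 := by
  simp (disch := decide) [potential, integral_planeWave_of_ne_zero]

theorem integral_potential_mul_helmholtz (a : ℝ) :
    integral (potential a * helmholtz (potential a)) = 4 * π ^ 2 * (a ^ 2 + a ^ 4 / 12) := by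
  rw [helmholtz_potential, potential]
  set E₁ := planeWave 0 (1, 1) + planeWave 0 (1, -1) with hE₁
  set E₂ := planeWave 0 (2, 0) + planeWave 0 (0, 2) with hE₂
  have h₁₁ : integral (E₁ * E₁) = 4 * π ^ 2 := by
    simp (disch := decide) only [hE₁, mul_add, add_mul, map_add, integral_planeWave_mul_self,
      integral_planeWave_mul_of_ne]
    ring
  have h₂₂ : integral (E₂ * E₂) = 4 * π ^ 2 := by
    simp (disch := decide) only [hE₂, mul_add, add_mul, map_add, integral_planeWave_mul_self,
      integral_planeWave_mul_of_ne]
    ring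
  have h₁₂ : integral (E₁ * E₂) = 0 := by
    simp (disch := decide) only [hE₁, hE₂, mul_add, add_mul, map_add,
      integral_planeWave_mul_of_ne, add_zero]
  simp only [mul_add, add_mul, smul_mul_smul_comm, map_add, map_smul, h₁₁, h₁₂, h₂₂,
    mul_comm E₂ E₁, smul_eq_mul]
  ring

theorem exists_pos_orthogonal_dirichletEnergy_lt :
    ∃ f φ : TorusFunction, (∀ p, 0 < f p) ∧ (∀ u, helmholtz u = 0 → integral (f * u) = 0) ∧
      integral (f * φ) = 0 ∧ dirichletEnergy φ < integral (φ ^ 2) := by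
  obtain ⟨a, ha, hc⟩ : ∃ a : ℝ, |a| < 1 ∧ 1 < a ^ 2 + a ^ 4 / 12 :=
    ⟨99 / 100, by norm_num [abs_lt], by norm_num⟩
  set c := a ^ 2 + a ^ 4 / 12
  set w := potential a
  have hmean : integral w = 0 := integral_potential a
  have henergy : integral (w * helmholtz w) = 4 * π ^ 2 * c := integral_potential_mul_helmholtz a
  refine ⟨1 + helmholtz w, c • 1 - w, fun p => ?_,
    fun u => integral_one_add_helmholtz_mul_eq_zero w, ?_,
    dirichletEnergy_smul_one_sub_lt hc hmean henergy⟩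
  · rw [one_add_helmholtz_potential]
    exact mul_pos (one_add_smul_planeWave_pos ha _ _ p) (one_add_smul_planeWave_pos ha _ _ p)
  · rw [integral_one_add_helmholtz_mul_smul_one_sub hmean, henergy, sub_self]

theorem intervalIntegral_mul_planeWave_eq_zero {f : TorusFunction}
    (hf : ∀ u, helmholtz u = 0 → integral (f * u) = 0) (θ : ℝ) {k : ℤ × ℤ}
    (hk : k.1 ^ 2 + k.2 ^ 2 = 1) :
    ∫ y in (0:ℝ)..(2 * π), ∫ x in (0:ℝ)..(2 * π), f (x, y) * cos (θ + k.1 * x + k.2 * y) = 0 :=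
  (intervalIntegral_eq_integral (f * planeWave θ k)).trans
    (hf _ (helmholtz_planeWave_eq_zero θ hk))

end TorusFunction

open TorusFunction

theorem counterexample_on_torus :
    ∃ f φ : ℝ → ℝ → ℝ,
      ContDiff ℝ (⊤ : ℕ∞) (fun p : ℝ × ℝ => f p.1 p.2) ∧
      ContDiff ℝ (⊤ : ℕ∞) (fun p : ℝ × ℝ => φ p.1 p.2) ∧
      (∀ x y, f (x + 2 * π) y = f x y ∧ f x (y + 2 * π) = f x y) ∧
      (∀ x y, φ (x + 2 * π) y = φ x y ∧ φ x (y + 2 * π) = φ x y) ∧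
      (∀ x y, 0 < f x y) ∧
      (∫ y in (0:ℝ)..(2 * π), ∫ x in (0:ℝ)..(2 * π), f x y * Real.cos x) = 0 ∧
      (∫ y in (0:ℝ)..(2 * π), ∫ x in (0:ℝ)..(2 * π), f x y * Real.sin x) = 0 ∧
      (∫ y in (0:ℝ)..(2 * π), ∫ x in (0:ℝ)..(2 * π), f x y * Real.cos y) = 0 ∧
      (∫ y in (0:ℝ)..(2 * π), ∫ x in (0:ℝ)..(2 * π), f x y * Real.sin y) = 0 ∧
      (∫ y in (0:ℝ)..(2 * π), ∫ x in (0:ℝ)..(2 * π), f x y * φ x y) = 0 ∧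
      (∫ y in (0:ℝ)..(2 * π), ∫ x in (0:ℝ)..(2 * π),
          (deriv (fun t => φ t y) x) ^ 2 + (deriv (fun t => φ x t) y) ^ 2)
        < ∫ y in (0:ℝ)..(2 * π), ∫ x in (0:ℝ)..(2 * π), (φ x y) ^ 2 := by
  obtain ⟨f, φ, hpos, horth, hfφ, hlt⟩ := exists_pos_orthogonal_dirichletEnergy_lt
  refine ⟨fun x y => f (x, y), fun x y => φ (x, y), f.contDiff, φ.contDiff,
    fun x y => ⟨f.periodic_fst x y, f.periodic_snd x y⟩,
    fun x y => ⟨φ.periodic_fst x y, φ.periodic_snd x y⟩,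
    fun x y => hpos (x, y), ?_, ?_, ?_, ?_, ?_, ?_⟩
  · simpa using intervalIntegral_mul_planeWave_eq_zero horth 0 (k := (1, 0)) rfl
  · simpa [neg_add_eq_sub, cos_sub_pi_div_two] using
      intervalIntegral_mul_planeWave_eq_zero horth (-(π / 2)) (k := (1, 0)) rfl
  · simpa using intervalIntegral_mul_planeWave_eq_zero horth 0 (k := (0, 1)) rfl
  · simpa [neg_add_eq_sub, cos_sub_pi_div_two] using
      intervalIntegral_mul_planeWave_eq_zero horth (-(π / 2)) (k := (0, 1)) rfl
  · exact (intervalIntegral_eq_integral (f * φ)).trans hfφ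
  · simp only [deriv_fst, deriv_snd]
    calc _ = dirichletEnergy φ := intervalIntegral_eq_integral _
      _ < integral (φ ^ 2) := hlt
      _ = _ := (intervalIntegral_eq_integral (φ ^ 2)).symm
end

section
/- Let ε be a real number with 1/2 < ε < 1 and define φ : ℝ² → ℝ by φ(x,y) = ε + cos x · cos y. Then φ attains both strictly positive and strictly negative values, and ∫₀^{2π}∫₀^{2π} [(∂φ/∂x)² + (∂φ/∂y)²] dx dy = 2π² < π²(4ε² + 1) = ∫₀^{2π}∫₀^{2π} φ(x,y)² dx dy. -/
open Real

/-!
For a separable function `u(x, y) = ε + f(x) g(y)` both `∫∫ |∇u|²` and `∫∫ u²` are polynomials in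
one-variable integrals. For `f = g = cos`, `∫ cos² = ∫ sin² = π` over a period, while `∫ cos = 0`
kills the cross term. Adding the constant `ε` to `cos x cos y` thus leaves the energy `2π²`
unchanged and raises the squared norm from `π²` to `π² + 4π²ε²`, which is larger for `ε > 1 / 2`.
-/

open MeasureTheory Set

section Separable

variable {α β : Type*} [MeasurableSpace α] [MeasurableSpace β] {μ : Measure α} {ν : Measure β}

theorem integral_const_add_mul_add_mul_sq [IsFiniteMeasure μ] {f : α → ℝ} (hf : MemLp f 2 μ)
    (a b c : ℝ) :
    ∫ x, (a + b * f x + c * f x ^ 2) ∂μ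
      = a * μ.real univ + b * ∫ x, f x ∂μ + c * ∫ x, f x ^ 2 ∂μ := by
  have hf₁ : Integrable (fun x => b * f x) μ := (hf.integrable one_le_two).const_mul b
  have hf₂ : Integrable (fun x => c * f x ^ 2) μ := hf.integrable_sq.const_mul c
  have haf₁ : Integrable (fun x => a + b * f x) μ := (integrable_const a).add hf₁
  rw [integral_add haf₁ hf₂, integral_add (integrable_const a) hf₁,
    integral_const, integral_const_mul, integral_const_mul, smul_eq_mul, mul_comm a]

theorem integral_integral_const_add_mul_sq [IsFiniteMeasure μ] [IsFiniteMeasure ν]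
    {f : α → ℝ} {g : β → ℝ} (hf : MemLp f 2 μ) (hg : MemLp g 2 ν) (k : ℝ) :
    ∫ y, ∫ x, (k + f x * g y) ^ 2 ∂μ ∂ν
      = k ^ 2 * (μ.real univ * ν.real univ) + 2 * k * ((∫ x, f x ∂μ) * ∫ y, g y ∂ν)
        + (∫ x, f x ^ 2 ∂μ) * ∫ y, g y ^ 2 ∂ν := by
  have integral_slice (y : β) : ∫ x, (k + f x * g y) ^ 2 ∂μ
      = k ^ 2 * μ.real univ + 2 * k * (∫ x, f x ∂μ) * g y + (∫ x, f x ^ 2 ∂μ) * g y ^ 2 := by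
    calc ∫ x, (k + f x * g y) ^ 2 ∂μ
        = ∫ x, (k ^ 2 + 2 * k * g y * f x + g y ^ 2 * f x ^ 2) ∂μ := by
          congr! 2; ring
      _ = _ := by rw [integral_const_add_mul_add_mul_sq hf]; ring
  simp only [integral_slice]
  rw [integral_const_add_mul_add_mul_sq hg]
  ring

theorem integral_integral_mul_add_mul {f₁ f₂ : α → ℝ} {g₁ g₂ : β → ℝ}
    (hf₁ : Integrable f₁ μ) (hf₂ : Integrable f₂ μ)
    (hg₁ : Integrable g₁ ν) (hg₂ : Integrable g₂ ν) :
    ∫ y, ∫ x, (f₁ x * g₁ y + f₂ x * g₂ y) ∂μ ∂ν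
      = (∫ x, f₁ x ∂μ) * (∫ y, g₁ y ∂ν) + (∫ x, f₂ x ∂μ) * ∫ y, g₂ y ∂ν := by
  simp only [integral_add (hf₁.mul_const _) (hf₂.mul_const _), integral_mul_const]
  rw [integral_add (hg₁.const_mul _) (hg₂.const_mul _), integral_const_mul, integral_const_mul]

theorem integral_integral_deriv_sq_add_deriv_sq_const_add_mul {μ ν : Measure ℝ} {f g : ℝ → ℝ}
    (hf : Integrable (fun x => f x ^ 2) μ) (hf' : Integrable (fun x => deriv f x ^ 2) μ)
    (hg : Integrable (fun y => g y ^ 2) ν) (hg' : Integrable (fun y => deriv g y ^ 2) ν) (k : ℝ) :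
    ∫ y, ∫ x, (deriv (fun t => k + f t * g y) x ^ 2
        + deriv (fun t => k + f x * g t) y ^ 2) ∂μ ∂ν
      = (∫ x, deriv f x ^ 2 ∂μ) * (∫ y, g y ^ 2 ∂ν)
        + (∫ x, f x ^ 2 ∂μ) * ∫ y, deriv g y ^ 2 ∂ν := by
  simp only [deriv_const_add, deriv_mul_const_field, deriv_const_mul_field, mul_pow]
  exact integral_integral_mul_add_mul hf' hf hg hg'

end Separable

section Torus

theorem integral_cos_period (a : ℝ) : ∫ x in a..a + 2 * π, cos x = 0 := by
  rw [integral_cos, sin_add_two_pi, sub_self]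

theorem integral_cos_sq_period (a : ℝ) : ∫ x in a..a + 2 * π, cos x ^ 2 = π := by
  rw [integral_cos_sq, sin_add_two_pi, cos_add_two_pi]
  ring

theorem integral_sin_sq_period (a : ℝ) : ∫ x in a..a + 2 * π, sin x ^ 2 = π := by
  rw [integral_sin_sq, sin_add_two_pi, cos_add_two_pi]
  ring

theorem le_add_two_pi (a : ℝ) : a ≤ a + 2 * π := le_add_of_nonneg_right two_pi_pos.le

theorem memLp_two_restrict_Ioc_of_continuous {f : ℝ → ℝ} (hf : Continuous f) (a b : ℝ) :
    MemLp f 2 (volume.restrict (Ioc a b)) :=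
  (memLp_two_iff_integrable_sq hf.aestronglyMeasurable).2 (hf.pow 2).integrableOn_Ioc

theorem integral_integral_deriv_sq_add_deriv_sq_const_add_cos_mul_cos (k a b : ℝ) :
    ∫ y in b..b + 2 * π, ∫ x in a..a + 2 * π,
        (deriv (fun t => k + cos t * cos y) x ^ 2 + deriv (fun t => k + cos x * cos t) y ^ 2)
      = 2 * π ^ 2 := by
  have hcos (c : ℝ) := memLp_two_restrict_Ioc_of_continuous continuous_cos c (c + 2 * π)
  have hcos' (c : ℝ) : MemLp (deriv cos) 2 (volume.restrict (Ioc c (c + 2 * π))) :=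
    memLp_two_restrict_Ioc_of_continuous (Real.deriv_cos' ▸ continuous_sin.neg) _ _
  simp only [intervalIntegral.integral_of_le (le_add_two_pi _)]
  rw [integral_integral_deriv_sq_add_deriv_sq_const_add_mul (hcos a).integrable_sq
    (hcos' a).integrable_sq (hcos b).integrable_sq (hcos' b).integrable_sq]
  simp only [Real.deriv_cos, neg_sq, ← intervalIntegral.integral_of_le (le_add_two_pi _),
    integral_cos_sq_period, integral_sin_sq_period]
  ring

theorem integral_integral_const_add_cos_mul_cos_sq (k a b : ℝ) :
    ∫ y in b..b + 2 * π, ∫ x in a..a + 2 * π, (k + cos x * cos y) ^ 2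
      = π ^ 2 * (4 * k ^ 2 + 1) := by
  have volume_period (c : ℝ) : (volume.restrict (Ioc c (c + 2 * π))).real univ = 2 * π := by
    rw [measureReal_restrict_apply_univ, volume_real_Ioc_of_le (le_add_two_pi c),
      add_sub_cancel_left]
  simp only [intervalIntegral.integral_of_le (le_add_two_pi _)]
  rw [integral_integral_const_add_mul_sq
    (memLp_two_restrict_Ioc_of_continuous continuous_cos _ _)
    (memLp_two_restrict_Ioc_of_continuous continuous_cos _ _)]
  simp only [volume_period, ← intervalIntegral.integral_of_le (le_add_two_pi _),
    integral_cos_period, integral_cos_sq_period]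
  ring

end Torus

theorem torus_test_function_computation
    (ε : ℝ) (hε : 1 / 2 < ε ∧ ε < 1)
    (φ : ℝ → ℝ → ℝ)
    (hφ : ∀ x y, φ x y = ε + Real.cos x * Real.cos y) :
    (∃ x y, 0 < φ x y) ∧ (∃ x y, φ x y < 0) ∧
    (∫ y in (0:ℝ)..(2 * π), ∫ x in (0:ℝ)..(2 * π),
        (deriv (fun t => φ t y) x) ^ 2 + (deriv (fun t => φ x t) y) ^ 2)
      = 2 * π ^ 2 ∧
    2 * π ^ 2 < π ^ 2 * (4 * ε ^ 2 + 1) ∧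
    π ^ 2 * (4 * ε ^ 2 + 1)
      = ∫ y in (0:ℝ)..(2 * π), ∫ x in (0:ℝ)..(2 * π), (φ x y) ^ 2 := by
  obtain ⟨half_lt_ε, ε_lt_one⟩ := hε
  obtain rfl : φ = fun x y => ε + cos x * cos y := funext₂ hφ
  have energy := integral_integral_deriv_sq_add_deriv_sq_const_add_cos_mul_cos ε 0 0
  have norm_sq := integral_integral_const_add_cos_mul_cos_sq ε 0 0
  simp only [zero_add] at energy norm_sq
  refine ⟨⟨0, 0, ?_⟩, ⟨0, π, ?_⟩, energy, ?_, norm_sq.symm⟩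
  · simp only [cos_zero]
    linarith
  · simp only [cos_zero, cos_pi]
    linarith
  · have two_lt : 2 < 4 * ε ^ 2 + 1 := by nlinarith
    rw [mul_comm]
    gcongr
end
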